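/- arXiv:2408.14200 — 2 statements merged into one kernel-verified Lean document; each statement's English description precedes it below -/
import Mathlib

section
/- Let n ≥ 1 be an integer and let u : ℝⁿ → ℝ be a smooth compactly supported function. Then lim_{s→1⁻} (c_{n,s}/2) ∬_{ℝⁿ×ℝⁿ} |u(x) − u(y)|² / |x−y|^{n+2s} dx dy = ∫_{ℝⁿ} |∇u(x)|² dx. That is, the squared L²(ℝⁿ×ℝⁿ)-norm of the fractional gradient ∇^s u converges, as s → 1⁻, to the squared L²(ℝⁿ)-norm of the classical gradient ∇u. -/
open MeasureTheory
noncomputable section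

/-- Euclidean space ℝⁿ. -/
abbrev RR (n : ℕ) := EuclideanSpace ℝ (Fin n)

/-- The constant c_{n,s} = 4^s Γ(n/2+s) / (π^{n/2} |Γ(-s)|). -/
def cns (n : ℕ) (s : ℝ) : ℝ :=
  (4 : ℝ) ^ s * Real.Gamma ((n : ℝ) / 2 + s) / (Real.pi ^ ((n : ℝ) / 2) * |Real.Gamma (-s)|)

/-!
Substituting `y = x + h`, the double integral becomes the integral of
`(u (x + h) - u x) ^ 2 / ‖h‖ ^ (n + 2 * s)` over `x` and `h`, and `1 - s` is exactly the factor for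
which the kernels `(1 - s) * ‖h‖ ^ (2 - n - 2 * s)` have constant mass `n * V / 2` on the unit ball,
`V` being its volume, while concentrating at `0` as `s → 1`. For fixed `x` only the linear part of
`u (x + h) - u x` survives in the limit, and by rotation invariance `⟪∇u x, h⟫ ^ 2` averages to
`‖∇u x‖ ^ 2 * ‖h‖ ^ 2 / n`, which leaves `V / 2 * ‖∇u x‖ ^ 2`; the Lipschitz bound dominates the
integral over `x`. For `‖h‖ ≥ 1` the integral stays bounded, so the factor `1 - s` removes it.
Finally `c_{n,s} / (1 - s) → 4 / V` by the functional equation of `Γ`. This is the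
Bourgain-Brezis-Mironescu argument.
-/

open Filter Metric Module Set Topology
open scoped NNReal

section Constant

lemma abs_Gamma_neg_of_mem_Ioo {s : ℝ} (hs : s ∈ Ioo 0 1) :
    |Real.Gamma (-s)| = Real.Gamma (2 - s) / (s * (1 - s)) := by
  obtain ⟨hs0, hs1⟩ := hs
  have hΓ : Real.Gamma (2 - s) = (1 - s) * (-s * Real.Gamma (-s)) := by
    rw [← Real.Gamma_add_one (by linarith), neg_add_eq_sub, ← Real.Gamma_add_one (by linarith)]
    ring_nf
  have hpos : 0 < Real.Gamma (2 - s) := Real.Gamma_pos_of_pos (by linarith)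
  have h1s : 0 < 1 - s := by linarith
  have hneg : Real.Gamma (-s) < 0 := by
    by_contra! h
    nlinarith [mul_nonneg (mul_nonneg h1s.le hs0.le) h]
  rw [abs_of_neg hneg, hΓ]
  field_simp

lemma cns_div_one_sub (n : ℕ) {s : ℝ} (hs : s ∈ Ioo 0 1) :
    cns n s / (1 - s) = 4 ^ s * Real.Gamma ((n : ℝ) / 2 + s) * s /
      (Real.pi ^ ((n : ℝ) / 2) * Real.Gamma (2 - s)) := by
  have hs0 : s ≠ 0 := hs.1.ne'
  have hs1 : 1 - s ≠ 0 := (sub_pos.2 hs.2).ne'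
  rw [cns, abs_Gamma_neg_of_mem_Ioo hs]
  field_simp

lemma continuousAt_Gamma_of_pos {x : ℝ} (hx : 0 < x) : ContinuousAt Real.Gamma x :=
  (Real.differentiableOn_Gamma_Ioi.differentiableAt (Ioi_mem_nhds hx)).continuousAt

lemma tendsto_cns_div_one_sub (n : ℕ) :
    Tendsto (fun s => cns n s / (1 - s)) (𝓝[<] 1)
      (𝓝 (4 * Real.Gamma ((n : ℝ) / 2 + 1) / Real.pi ^ ((n : ℝ) / 2))) := by
  have hΓ₁ : ContinuousAt (fun s : ℝ => Real.Gamma ((n : ℝ) / 2 + s)) 1 :=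
    (continuousAt_Gamma_of_pos (by positivity)).comp (by fun_prop)
  have hΓ₂ : ContinuousAt (fun s : ℝ => Real.Gamma (2 - s)) 1 :=
    (continuousAt_Gamma_of_pos (by norm_num)).comp (by fun_prop)
  have h4 : ContinuousAt (fun s : ℝ => (4 : ℝ) ^ s) 1 :=
    (Real.continuous_const_rpow (by norm_num)).continuousAt
  have hΓone : Real.Gamma (2 - 1) = 1 := by norm_num
  have hlim := ((h4.mul hΓ₁).mul continuousAt_id).div
    (continuousAt_const (y := Real.pi ^ ((n : ℝ) / 2)) |>.mul hΓ₂)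
    (by simp only [Pi.mul_apply, hΓone]; positivity)
  have hlim' := hlim.tendsto.mono_left (nhdsWithin_le_nhds (s := Iio 1))
  simp only [Pi.div_apply, Pi.mul_apply, hΓone, Real.rpow_one, id, mul_one] at hlim'
  refine hlim'.congr' ?_
  filter_upwards [Ioo_mem_nhdsLT zero_lt_one] with s hs
  exact (cns_div_one_sub n hs).symm

variable {E : Type*} [NormedAddCommGroup E] [InnerProductSpace ℝ E] [FiniteDimensional ℝ E]
  [MeasurableSpace E] [BorelSpace E] [Nontrivial E]

lemma volume_real_ball_zero_one :
    volume.real (ball (0 : E) 1) =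
      Real.pi ^ ((finrank ℝ E : ℝ) / 2) / Real.Gamma ((finrank ℝ E : ℝ) / 2 + 1) := by
  rw [Measure.real, InnerProductSpace.volume_ball, ENNReal.ofReal_one, one_pow, one_mul,
    ENNReal.toReal_ofReal (by positivity), Real.sqrt_eq_rpow,
    ← Real.rpow_mul_natCast Real.pi_nonneg]
  ring_nf

lemma tendsto_cns_finrank_div_one_sub :
    Tendsto (fun s => cns (finrank ℝ E) s / (1 - s)) (𝓝[<] 1)
      (𝓝 (4 / volume.real (ball (0 : E) 1))) := by
  rw [volume_real_ball_zero_one, div_div_eq_mul_div]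
  exact tendsto_cns_div_one_sub _

end Constant

lemma measureReal_ball_pos {X : Type*} [PseudoMetricSpace X] [ProperSpace X] [MeasurableSpace X]
    (μ : Measure X) [μ.IsOpenPosMeasure] [IsFiniteMeasureOnCompacts μ] (x : X) {r : ℝ}
    (hr : 0 < r) : 0 < μ.real (ball x r) :=
  ENNReal.toReal_pos (measure_ball_pos μ x hr).ne' measure_ball_lt_top.ne

section NormPower

variable {E : Type*} [NormedAddCommGroup E]

lemma tendstoUniformlyOn_one_sub_mul_norm_sq_div_norm_rpow {d r : ℝ} (hd : 0 ≤ d) (hr : 0 < r) :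
    TendstoUniformlyOn (fun (s : ℝ) (h : E) => (1 - s) * (‖h‖ ^ 2 / ‖h‖ ^ (d + 2 * s))) 0
      (𝓝[<] 1) (ball 0 1 \ ball 0 r) := by
  have hlim : Tendsto (fun s : ℝ => (1 - s) * (r ^ (d + 2))⁻¹) (𝓝[<] 1) (𝓝 0) :=
    ((by fun_prop : Continuous _).tendsto' 1 0 (by simp)).mono_left nhdsWithin_le_nhds
  rw [Metric.tendstoUniformlyOn_iff]
  intro ε hε
  filter_upwards [hlim.eventually_lt_const hε, self_mem_nhdsWithin] with s hsε hs h ⟨hh1, hhr⟩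
  rw [mem_ball_zero_iff] at hh1
  rw [mem_ball_zero_iff, not_lt] at hhr
  have hh0 : 0 < ‖h‖ := hr.trans_le hhr
  have hs1 : 0 ≤ 1 - s := (sub_pos.2 hs).le
  rw [Pi.zero_apply, dist_zero_left, Real.norm_of_nonneg (by positivity)]
  refine lt_of_le_of_lt ?_ hsε
  gcongr
  calc ‖h‖ ^ 2 / ‖h‖ ^ (d + 2 * s) ≤ 1 / r ^ (d + 2) := by
        gcongr ?_ / ?_
        · exact pow_le_one₀ hh0.le hh1.le
        · calc r ^ (d + 2) ≤ ‖h‖ ^ (d + 2) := by gcongr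
            _ ≤ ‖h‖ ^ (d + 2 * s) :=
              Real.rpow_le_rpow_of_exponent_ge hh0 hh1.le (by linarith [mem_Iio.1 hs])
    _ = (r ^ (d + 2))⁻¹ := one_div _

variable [NormedSpace ℝ E] [FiniteDimensional ℝ E]

lemma norm_sq_div_norm_rpow [Nontrivial E] {s : ℝ} (hs : 1 / 2 < s) (h : E) :
    ‖h‖ ^ 2 / ‖h‖ ^ (finrank ℝ E + 2 * s) = ‖h‖ ^ (2 - finrank ℝ E - 2 * s) := by
  have hd : (1 : ℝ) ≤ finrank ℝ E := by exact_mod_cast finrank_pos (R := ℝ) (M := E)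
  rw [sub_sub, Real.rpow_sub' (norm_nonneg h) (by linarith), Real.rpow_two]

variable [MeasurableSpace E] [BorelSpace E] {μ : Measure E} [μ.IsAddHaarMeasure]

lemma integrableOn_compl_ball_norm_rpow {b r : ℝ} (hb : b < -(finrank ℝ E : ℝ)) (hr : 0 < r) :
    IntegrableOn (fun x : E => ‖x‖ ^ b) (ball 0 r)ᶜ μ := by
  have hb0 : b ≤ 0 := hb.le.trans (by simp)
  have hint := (integrable_one_add_norm (μ := μ) (lt_neg_of_lt_neg hb)).const_mul ((1 + r⁻¹) ^ (-b))
  refine hint.integrableOn.mono' (by fun_prop : Measurable _).aestronglyMeasurable ?_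
  filter_upwards [ae_restrict_mem measurableSet_ball.compl] with x hx
  have hxr : r ≤ ‖x‖ := by simpa using hx
  have hx0 : 0 < ‖x‖ := hr.trans_le hxr
  have hle : 1 + ‖x‖ ≤ (1 + r⁻¹) * ‖x‖ := by
    have : 1 ≤ r⁻¹ * ‖x‖ := by rwa [← div_eq_inv_mul, one_le_div hr]
    linarith
  rw [neg_neg, Real.norm_of_nonneg (by positivity)]
  calc ‖x‖ ^ b = (1 + r⁻¹) ^ (-b) * ((1 + r⁻¹) * ‖x‖) ^ b := by
        rw [Real.mul_rpow (by positivity) hx0.le, ← mul_assoc, ← Real.rpow_add (by positivity),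
          neg_add_cancel, Real.rpow_zero, one_mul]
    _ ≤ (1 + r⁻¹) ^ (-b) * (1 + ‖x‖) ^ b := by
        gcongr ?_ * ?_
        exact Real.rpow_le_rpow_of_nonpos (by positivity) hle hb0

variable [Nontrivial E]

lemma integrableOn_ball_norm_rpow {b : ℝ} (hb : -(finrank ℝ E : ℝ) < b) (r : ℝ) :
    IntegrableOn (fun x : E => ‖x‖ ^ b) (ball 0 r) μ :=
  integrableOn_ball_of_norm_le_rpow (C := 1) (α := -b) finrank_pos (by linarith)
    (ae_of_all _ fun x => by rw [neg_neg, one_mul, Real.norm_of_nonneg (by positivity)])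
    (by fun_prop : Measurable _).aestronglyMeasurable

lemma setIntegral_ball_norm_rpow {b r : ℝ} (hb : -(finrank ℝ E : ℝ) < b) (hr : 0 ≤ r) :
    ∫ x in ball (0 : E) r, ‖x‖ ^ b ∂μ =
      finrank ℝ E * μ.real (ball 0 1) * r ^ (finrank ℝ E + b) / (finrank ℝ E + b) := by
  have hball : (ball (0 : E) r).indicator (fun x => ‖x‖ ^ b) =
      fun x => (Iio r).indicator (fun t : ℝ => t ^ b) ‖x‖ := by
    ext x
    by_cases hx : ‖x‖ < r <;> simp [hx]
  have hpow : ∀ t ∈ Ioi (0 : ℝ), t ^ (finrank ℝ E - 1) • (Iio r).indicator (fun t : ℝ => t ^ b) t =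
      (Iio r).indicator (fun t => t ^ (finrank ℝ E + b - 1)) t := by
    intro t ht
    have hexp : ((finrank ℝ E - 1 : ℕ) : ℝ) + b = finrank ℝ E + b - 1 := by
      rw [Nat.cast_sub finrank_pos]
      push_cast
      ring
    simp only [indicator_apply, smul_eq_mul, mul_ite, mul_zero, ← Real.rpow_natCast,
      ← Real.rpow_add ht, hexp]
  rw [← integral_indicator measurableSet_ball, hball, integral_fun_norm_addHaar,
    setIntegral_congr_fun measurableSet_Ioi hpow, setIntegral_indicator measurableSet_Iio,
    Ioi_inter_Iio, ← integral_Ioc_eq_integral_Ioo, ← intervalIntegral.integral_of_le hr,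
    integral_rpow (Or.inl (by linarith)), sub_add_cancel, Real.zero_rpow (by linarith)]
  simp only [nsmul_eq_mul, smul_eq_mul]
  ring

lemma integrableOn_ball_norm_sq_div_norm_rpow {s : ℝ} (hs : s ∈ Ioo (1 / 2) 1) :
    IntegrableOn (fun h : E => ‖h‖ ^ 2 / ‖h‖ ^ (finrank ℝ E + 2 * s)) (ball 0 1) μ := by
  simp_rw [norm_sq_div_norm_rpow hs.1]
  exact integrableOn_ball_norm_rpow (by linarith [hs.2]) 1

lemma integrableOn_ball_sq_div_norm_rpow {f : E → ℝ} {C : ℝ} (hf : Measurable f)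
    (hfC : ∀ h, |f h| ≤ C * ‖h‖) {s : ℝ} (hs : s ∈ Ioo (1 / 2) 1) :
    IntegrableOn (fun h : E => f h ^ 2 / ‖h‖ ^ (finrank ℝ E + 2 * s)) (ball 0 1) μ := by
  refine ((integrableOn_ball_norm_sq_div_norm_rpow hs).const_mul (C ^ 2)).mono'
    (by fun_prop : Measurable _).aestronglyMeasurable (ae_of_all _ fun h => ?_)
  rw [Real.norm_of_nonneg (by positivity), ← mul_div_assoc, ← mul_pow, ← sq_abs (f h)]
  gcongr
  exact hfC h

lemma one_sub_mul_setIntegral_ball_norm_sq_div_norm_rpow {s : ℝ} (hs : s ∈ Ioo (1 / 2) 1) :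
    (1 - s) * ∫ h in ball (0 : E) 1, ‖h‖ ^ 2 / ‖h‖ ^ (finrank ℝ E + 2 * s) ∂μ =
      finrank ℝ E * μ.real (ball 0 1) / 2 := by
  have hs1 : 1 - s ≠ 0 := (sub_pos.2 hs.2).ne'
  have hexp : (finrank ℝ E : ℝ) + (2 - finrank ℝ E - 2 * s) = 2 * (1 - s) := by ring
  simp_rw [norm_sq_div_norm_rpow hs.1]
  rw [setIntegral_ball_norm_rpow (by linarith [hs.2]) zero_le_one, Real.one_rpow, hexp]
  field_simp

lemma tendsto_one_sub_mul_setIntegral_ball_norm_sq_div_norm_rpow_mul {g : E → ℝ} {a : ℝ}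
    (hg : IntegrableOn g (ball 0 1) μ) (hga : Tendsto g (𝓝 0) (𝓝 a)) :
    Tendsto (fun s : ℝ => (1 - s) *
        ∫ h in ball (0 : E) 1, ‖h‖ ^ 2 / ‖h‖ ^ (finrank ℝ E + 2 * s) * g h ∂μ)
      (𝓝[<] 1) (𝓝 (finrank ℝ E * μ.real (ball 0 1) / 2 * a)) := by
  set m : ℝ := finrank ℝ E * μ.real (ball 0 1) / 2
  have hm : 0 < m := by
    have := finrank_pos (R := ℝ) (M := E)
    have := measureReal_ball_pos μ (0 : E) one_pos
    positivity
  let φ : ℝ → E → ℝ := fun s h => m⁻¹ * ((1 - s) * (‖h‖ ^ 2 / ‖h‖ ^ (finrank ℝ E + 2 * s)))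
  have hev : ∀ᶠ s : ℝ in 𝓝[<] 1, s ∈ Ioo (1 / 2) 1 := Ioo_mem_nhdsLT (by norm_num)
  have hpeak : Tendsto (fun s => ∫ h in ball 0 1, φ s h • g h ∂μ) (𝓝[<] 1) (𝓝 a) := by
    refine tendsto_setIntegral_peak_smul_of_integrableOn_of_tendsto measurableSet_ball
      measurableSet_ball subset_rfl self_mem_nhdsWithin measure_ball_lt_top.ne ?_ ?_ ?_ ?_ hg
      (hga.mono_left nhdsWithin_le_nhds)
    · filter_upwards [hev] with s hs h _
      have hs1 : 0 ≤ 1 - s := (sub_pos.2 hs.2).le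
      positivity
    · intro U hU h0U
      obtain ⟨r, hr, hrU⟩ := Metric.isOpen_iff.1 hU 0 h0U
      have hunif := (tendstoUniformlyOn_one_sub_mul_norm_sq_div_norm_rpow (E := E)
        (Nat.cast_nonneg (finrank ℝ E)) hr).mono (sdiff_subset_sdiff_right hrU)
      have hscaled := (uniformContinuous_const_smul m⁻¹).comp_tendstoUniformlyOn hunif
      simpa [Function.comp_def, Pi.zero_def, φ] using hscaled
    · refine tendsto_const_nhds.congr' ?_
      filter_upwards [hev] with s hs
      rw [integral_const_mul, integral_const_mul,
        one_sub_mul_setIntegral_ball_norm_sq_div_norm_rpow hs, inv_mul_cancel₀ hm.ne']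
    · exact Eventually.of_forall fun s => (by fun_prop : Measurable _).aestronglyMeasurable
  have hφ : ∀ s, m * ∫ h in ball 0 1, φ s h • g h ∂μ =
      (1 - s) * ∫ h in ball (0 : E) 1, ‖h‖ ^ 2 / ‖h‖ ^ (finrank ℝ E + 2 * s) * g h ∂μ := fun s => by
    simp_rw [φ, smul_eq_mul, mul_assoc, integral_const_mul]
    rw [mul_inv_cancel_left₀ hm.ne']
  simpa only [hφ] using hpeak.const_mul m

end NormPower

section Isotropy

variable {E : Type*} [NormedAddCommGroup E] [InnerProductSpace ℝ E] [MeasurableSpace E]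
  [BorelSpace E]

lemma integral_inner_sq_mul_eq_of_norm_eq {μ : Measure E}
    (hμ : ∀ R : E ≃ₗᵢ[ℝ] E, MeasurePreserving R μ μ) (w : ℝ → ℝ) {v v' : E} (hv : ‖v‖ = ‖v'‖) :
    ∫ h, inner ℝ v h ^ 2 * w ‖h‖ ∂μ = ∫ h, inner ℝ v' h ^ 2 * w ‖h‖ ∂μ := by
  obtain ⟨R, rfl⟩ : ∃ R : E ≃ₗᵢ[ℝ] E, R v = v' :=
    ⟨(ℝ ∙ (v - v'))ᗮ.reflection, Submodule.reflection_sub hv⟩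
  rw [← (hμ R).integral_comp R.toHomeomorph.measurableEmbedding
    (fun h => inner ℝ (R v) h ^ 2 * w ‖h‖)]
  simp_rw [LinearIsometryEquiv.inner_map_map, LinearIsometryEquiv.norm_map]

variable [FiniteDimensional ℝ E]

lemma integrable_inner_sq_mul_of_norm_sq_mul {μ : Measure E} {k : E → ℝ}
    (hk : Integrable (fun h => ‖h‖ ^ 2 * k h) μ) (v : E) :
    Integrable (fun h => inner ℝ v h ^ 2 * k h) μ := by
  have hbdd : ∀ h : E, ‖(inner ℝ v h / ‖h‖) ^ 2‖ ≤ ‖v‖ ^ 2 := fun h => by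
    rw [norm_pow, norm_div, norm_norm]
    gcongr
    exact div_le_of_le_mul₀ (norm_nonneg _) (norm_nonneg _) (norm_inner_le_norm v h)
  refine (hk.bdd_mul (by fun_prop : Measurable _).aestronglyMeasurable (ae_of_all _ hbdd)).congr
    (ae_of_all _ fun h => ?_)
  rcases eq_or_ne h 0 with rfl | hh
  · simp
  · have : ‖h‖ ≠ 0 := norm_ne_zero_iff.2 hh
    field_simp

lemma finrank_mul_integral_inner_sq_mul {μ : Measure E}
    (hμ : ∀ R : E ≃ₗᵢ[ℝ] E, MeasurePreserving R μ μ) {w : ℝ → ℝ}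
    (hw : Integrable (fun h => ‖h‖ ^ 2 * w ‖h‖) μ) (v : E) :
    finrank ℝ E * ∫ h, inner ℝ v h ^ 2 * w ‖h‖ ∂μ = ‖v‖ ^ 2 * ∫ h, ‖h‖ ^ 2 * w ‖h‖ ∂μ := by
  let e := stdOrthonormalBasis ℝ E
  have hrot : ∀ i, ∫ h, inner ℝ v h ^ 2 * w ‖h‖ ∂μ =
      ‖v‖ ^ 2 * ∫ h, inner ℝ (e i) h ^ 2 * w ‖h‖ ∂μ := fun i => by
    have hnorm : ‖v‖ = ‖‖v‖ • e i‖ := by rw [norm_smul, norm_norm, e.norm_eq_one, mul_one]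
    rw [integral_inner_sq_mul_eq_of_norm_eq hμ w hnorm]
    simp_rw [real_inner_smul_left, mul_pow, mul_assoc, integral_const_mul]
  calc finrank ℝ E * ∫ h, inner ℝ v h ^ 2 * w ‖h‖ ∂μ
      = ∑ i, ‖v‖ ^ 2 * ∫ h, inner ℝ (e i) h ^ 2 * w ‖h‖ ∂μ := by simp [← hrot]
    _ = ‖v‖ ^ 2 * ∫ h, ∑ i, inner ℝ (e i) h ^ 2 * w ‖h‖ ∂μ := by
        rw [← Finset.mul_sum,
          integral_finsetSum _ fun i _ => integrable_inner_sq_mul_of_norm_sq_mul hw (e i)]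
    _ = ‖v‖ ^ 2 * ∫ h, ‖h‖ ^ 2 * w ‖h‖ ∂μ := by
        simp_rw [← Finset.sum_mul, e.sum_sq_inner_right]

lemma measurePreserving_restrict_ball_zero (R : E ≃ₗᵢ[ℝ] E) (r : ℝ) :
    MeasurePreserving R (volume.restrict (ball 0 r)) (volume.restrict (ball 0 r)) := by
  have hball : R ⁻¹' ball 0 r = ball 0 r := by simp
  simpa only [hball] using
    R.measurePreserving.restrict_preimage (measurableSet_ball (x := (0 : E)) (ε := r))

lemma one_sub_mul_setIntegral_ball_inner_sq_div_norm_rpow [Nontrivial E] {s : ℝ}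
    (hs : s ∈ Ioo (1 / 2) 1) (v : E) :
    (1 - s) * ∫ h in ball (0 : E) 1, inner ℝ v h ^ 2 / ‖h‖ ^ (finrank ℝ E + 2 * s) =
      volume.real (ball (0 : E) 1) / 2 * ‖v‖ ^ 2 := by
  have hd : (finrank ℝ E : ℝ) ≠ 0 := by exact_mod_cast (finrank_pos (R := ℝ) (M := E)).ne'
  have hiso := finrank_mul_integral_inner_sq_mul
    (fun R => measurePreserving_restrict_ball_zero R 1)
    (w := fun t => (t ^ (finrank ℝ E + 2 * s))⁻¹)
    (integrableOn_ball_norm_sq_div_norm_rpow (E := E) hs) v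
  have hmass := one_sub_mul_setIntegral_ball_norm_sq_div_norm_rpow (E := E) (μ := volume) hs
  simp only [← div_eq_mul_inv] at hiso
  apply mul_left_cancel₀ hd
  linear_combination (1 - s) * hiso + ‖v‖ ^ 2 * hmass

end Isotropy

section DifferenceQuotient

variable {E : Type*} [NormedAddCommGroup E] [InnerProductSpace ℝ E]

lemma tendsto_sq_sub_inner_sq_div_norm_sq {f : E → ℝ} {v : E}
    (hfv : (fun h => f h - inner ℝ v h) =o[𝓝 0] fun h => h) :
    Tendsto (fun h => (f h ^ 2 - inner ℝ v h ^ 2) / ‖h‖ ^ 2) (𝓝 0) (𝓝 0) := by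
  have hinner : (fun h => inner ℝ v h) =O[𝓝 0] fun h : E => h :=
    (innerSL ℝ v).isBigO_id (𝓝 0)
  have hsum : (fun h => f h + inner ℝ v h) =O[𝓝 0] fun h => h :=
    (hfv.isBigO.add (hinner.const_mul_left 2)).congr_left fun h => by ring
  have hprod := hfv.norm_right.mul_isBigO hsum.norm_right
  refine hprod.tendsto_div_nhds_zero.congr fun h => ?_
  ring

variable [FiniteDimensional ℝ E] [MeasurableSpace E] [BorelSpace E]

lemma integrableOn_ball_sq_sub_inner_sq_div_norm_sq {f : E → ℝ} {C : ℝ} (v : E)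
    (hf : Measurable f) (hfC : ∀ h, |f h| ≤ C * ‖h‖) :
    IntegrableOn (fun h => (f h ^ 2 - inner ℝ v h ^ 2) / ‖h‖ ^ 2) (ball 0 1) := by
  refine Measure.integrableOn_of_bounded (M := C ^ 2 + ‖v‖ ^ 2) measure_ball_lt_top.ne
    (by fun_prop : Measurable _).aestronglyMeasurable (ae_of_all _ fun h => ?_)
  have hf2 : f h ^ 2 ≤ C ^ 2 * ‖h‖ ^ 2 := by
    rw [← mul_pow, ← sq_abs]
    gcongr
    exact hfC h
  have hv2 : inner ℝ v h ^ 2 ≤ ‖v‖ ^ 2 * ‖h‖ ^ 2 := by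
    rw [← mul_pow, ← sq_abs]
    gcongr
    exact abs_real_inner_le_norm v h
  rw [norm_div, norm_pow, norm_norm]
  refine div_le_of_le_mul₀ (by positivity) (by positivity) (abs_le.2 ⟨?_, ?_⟩) <;>
  nlinarith [sq_nonneg (f h), sq_nonneg (inner ℝ v h)]

lemma tendsto_one_sub_mul_setIntegral_ball_sq_div_norm_rpow [Nontrivial E] {f : E → ℝ} {C : ℝ}
    {v : E} (hf : Measurable f) (hfC : ∀ h, |f h| ≤ C * ‖h‖)
    (hfv : (fun h => f h - inner ℝ v h) =o[𝓝 0] fun h => h) :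
    Tendsto (fun s : ℝ => (1 - s) * ∫ h in ball (0 : E) 1, f h ^ 2 / ‖h‖ ^ (finrank ℝ E + 2 * s))
      (𝓝[<] 1) (𝓝 (volume.real (ball (0 : E) 1) / 2 * ‖v‖ ^ 2)) := by
  let g : E → ℝ := fun h => (f h ^ 2 - inner ℝ v h ^ 2) / ‖h‖ ^ 2
  have hg : IntegrableOn g (ball 0 1) := integrableOn_ball_sq_sub_inner_sq_div_norm_sq v hf hfC
  have herr := tendsto_one_sub_mul_setIntegral_ball_norm_sq_div_norm_rpow_mul hg
    (tendsto_sq_sub_inner_sq_div_norm_sq hfv)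
  rw [mul_zero] at herr
  rw [← add_zero (_ * ‖v‖ ^ 2)]
  refine (herr.const_add _).congr' ?_
  filter_upwards [Ioo_mem_nhdsLT (by norm_num : (1 / 2 : ℝ) < 1)] with s hs
  have hsub : ∀ h : E, ‖h‖ ^ 2 / ‖h‖ ^ (finrank ℝ E + 2 * s) * g h =
      f h ^ 2 / ‖h‖ ^ (finrank ℝ E + 2 * s) - inner ℝ v h ^ 2 / ‖h‖ ^ (finrank ℝ E + 2 * s) := by
    intro h
    rcases eq_or_ne h 0 with rfl | hh
    · have hf0 : f 0 = 0 := by simpa using hfC 0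
      simp [hf0]
    · have hh' : ‖h‖ ≠ 0 := norm_ne_zero_iff.2 hh
      simp only [g]
      field_simp
  simp_rw [hsub]
  rw [integral_sub (integrableOn_ball_sq_div_norm_rpow hf hfC hs)
    (integrableOn_ball_sq_div_norm_rpow (by fun_prop) (abs_real_inner_le_norm v) hs), mul_sub,
    one_sub_mul_setIntegral_ball_inner_sq_div_norm_rpow hs, add_sub_cancel]

end DifferenceQuotient

section NearDiagonal

variable {E : Type*} [NormedAddCommGroup E] {u : E → ℝ} {C : ℝ≥0}

lemma abs_sub_le_mul_norm_of_lipschitzWith (hu : LipschitzWith C u) (x h : E) :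
    |u (x + h) - u x| ≤ C * ‖h‖ := by
  simpa [Real.dist_eq] using hu.dist_le_mul (x + h) x

lemma sub_eq_zero_of_notMem_cthickening_tsupport {r : ℝ} {x h : E}
    (hx : x ∉ cthickening r (tsupport u)) (hh : ‖h‖ ≤ r) : u (x + h) - u x = 0 := by
  have hxu : u x = 0 := image_eq_zero_of_notMem_tsupport fun hxt =>
    hx (self_subset_cthickening _ hxt)
  have hxhu : u (x + h) = 0 := image_eq_zero_of_notMem_tsupport fun hxt =>
    hx (mem_cthickening_of_dist_le x (x + h) r _ hxt (by simpa using hh))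
  rw [hxu, hxhu, sub_zero]

lemma sq_sub_le_indicator_mul_norm_sq (hu : LipschitzWith C u) {r : ℝ} (x : E) {h : E}
    (hh : ‖h‖ ≤ r) :
    (u (x + h) - u x) ^ 2 ≤
      (cthickening r (tsupport u)).indicator (fun _ => (C : ℝ) ^ 2) x * ‖h‖ ^ 2 := by
  by_cases hx : x ∈ cthickening r (tsupport u)
  · rw [indicator_of_mem hx, ← mul_pow, ← sq_abs]
    gcongr
    exact abs_sub_le_mul_norm_of_lipschitzWith hu x h
  · rw [indicator_of_notMem hx, sub_eq_zero_of_notMem_cthickening_tsupport hx hh]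
    simp

variable [InnerProductSpace ℝ E] [FiniteDimensional ℝ E] [MeasurableSpace E] [BorelSpace E]

lemma integrable_indicator_cthickening_tsupport (hcu : HasCompactSupport u) (r c : ℝ) :
    Integrable ((cthickening r (tsupport u)).indicator fun _ => c) :=
  (integrable_indicator_iff isClosed_cthickening.measurableSet).2
    (integrableOn_const (IsCompact.cthickening hcu).measure_lt_top.ne)

variable [Nontrivial E]

lemma integrable_sq_sub_div_norm_rpow_prod_ball (hu : LipschitzWith C u)
    (hcu : HasCompactSupport u) {s : ℝ} (hs : s ∈ Ioo (1 / 2) 1) :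
    Integrable (fun p : E × E => (u (p.1 + p.2) - u p.1) ^ 2 / ‖p.2‖ ^ (finrank ℝ E + 2 * s))
      (volume.prod (volume.restrict (ball 0 1))) := by
  have hu_meas : Measurable u := hu.continuous.measurable
  have hT := integrable_indicator_cthickening_tsupport hcu 1 ((C : ℝ) ^ 2)
  refine (hT.mul_prod (integrableOn_ball_norm_sq_div_norm_rpow (E := E) hs)).mono'
    (by fun_prop : Measurable _).aestronglyMeasurable ?_
  filter_upwards [Measure.quasiMeasurePreserving_snd.ae (ae_restrict_mem measurableSet_ball)]
    with ⟨x, h⟩ hh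
  rw [Real.norm_of_nonneg (by positivity), ← mul_div_assoc]
  gcongr
  exact sq_sub_le_indicator_mul_norm_sq hu x (mem_ball_zero_iff.1 hh).le

lemma one_sub_mul_setIntegral_ball_sq_sub_le_indicator (hu : LipschitzWith C u) {s : ℝ}
    (hs : s ∈ Ioo (1 / 2) 1) (x : E) :
    (1 - s) * ∫ h in ball (0 : E) 1, (u (x + h) - u x) ^ 2 / ‖h‖ ^ (finrank ℝ E + 2 * s) ≤
      (cthickening 1 (tsupport u)).indicator (fun _ => (C : ℝ) ^ 2) x *
        (finrank ℝ E * volume.real (ball (0 : E) 1) / 2) := by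
  have hu_meas : Measurable u := hu.continuous.measurable
  have hs1 : 0 ≤ 1 - s := (sub_pos.2 hs.2).le
  rw [← one_sub_mul_setIntegral_ball_norm_sq_div_norm_rpow hs, mul_left_comm,
    ← integral_const_mul (indicator _ _ x)]
  gcongr ?_ * ?_
  refine setIntegral_mono_on (integrableOn_ball_sq_div_norm_rpow (by fun_prop)
    (abs_sub_le_mul_norm_of_lipschitzWith hu x) hs)
    ((integrableOn_ball_norm_sq_div_norm_rpow hs).const_mul _) measurableSet_ball fun h hh => ?_
  rw [← mul_div_assoc]
  gcongr
  exact sq_sub_le_indicator_mul_norm_sq hu x (mem_ball_zero_iff.1 hh).le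

lemma tendsto_one_sub_mul_integral_prod_ball (hu : LipschitzWith C u)
    (hcu : HasCompactSupport u) :
    Tendsto (fun s : ℝ => (1 - s) * ∫ p : E × E, (u (p.1 + p.2) - u p.1) ^ 2 /
        ‖p.2‖ ^ (finrank ℝ E + 2 * s) ∂volume.prod (volume.restrict (ball 0 1)))
      (𝓝[<] 1) (𝓝 (volume.real (ball (0 : E) 1) / 2 * ∫ x, ‖gradient u x‖ ^ 2)) := by
  have hu_meas : Measurable u := hu.continuous.measurable
  have hev : ∀ᶠ s : ℝ in 𝓝[<] 1, s ∈ Ioo (1 / 2) 1 := Ioo_mem_nhdsLT (by norm_num)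
  have hlim : Tendsto (fun s : ℝ => ∫ x, (1 - s) * ∫ h in ball (0 : E) 1,
      (u (x + h) - u x) ^ 2 / ‖h‖ ^ (finrank ℝ E + 2 * s)) (𝓝[<] 1)
      (𝓝 (∫ x, volume.real (ball (0 : E) 1) / 2 * ‖gradient u x‖ ^ 2)) := by
    refine tendsto_integral_filter_of_dominated_convergence
      _ ?_ ?_ ((integrable_indicator_cthickening_tsupport hcu 1 ((C : ℝ) ^ 2)).mul_const
        (finrank ℝ E * volume.real (ball (0 : E) 1) / 2)) ?_
    · filter_upwards [hev] with s hs
      exact ((integrable_sq_sub_div_norm_rpow_prod_ball hu hcu hs).integral_prod_left.const_mul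
        _).aestronglyMeasurable
    · filter_upwards [hev] with s hs
      refine ae_of_all _ fun x => ?_
      have hs1 : 0 ≤ 1 - s := (sub_pos.2 hs.2).le
      rw [Real.norm_of_nonneg (mul_nonneg hs1 (integral_nonneg fun h => by positivity))]
      exact one_sub_mul_setIntegral_ball_sq_sub_le_indicator hu hs x
    · filter_upwards [hu.ae_differentiableAt] with x hx
      exact tendsto_one_sub_mul_setIntegral_ball_sq_div_norm_rpow (by fun_prop)
        (abs_sub_le_mul_norm_of_lipschitzWith hu x)
        (hasGradientAt_iff_isLittleO_nhds_zero.1 hx.hasGradientAt)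
  rw [integral_const_mul] at hlim
  refine hlim.congr' ?_
  filter_upwards [hev] with s hs
  rw [integral_const_mul, integral_prod _ (integrable_sq_sub_div_norm_rpow_prod_ball hu hcu hs)]

end NearDiagonal

section ShearedProduct

variable {G : Type*} [AddGroup G] [MeasurableSpace G] [MeasurableAdd₂ G] {μ ν : Measure G}
  [SFinite μ]

lemma integrable_comp_add_mul_prod [μ.IsAddRightInvariant] [SFinite ν] {f k : G → ℝ}
    (hf : Integrable f μ) (hk : Integrable k ν) :
    Integrable (fun p : G × G => f (p.1 + p.2) * k p.2) (μ.prod ν) :=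
  (measurePreserving_add_prod μ ν).integrable_comp_of_integrable (hf.mul_prod hk)

lemma integral_prod_comp_add_eq [MeasurableNeg G] [μ.IsAddLeftInvariant] (F : G × G → ℝ) :
    ∫ p : G × G, F (p.1, p.1 + p.2) ∂μ.prod μ = ∫ p, F p ∂μ.prod μ :=
  (measurePreserving_prod_add μ μ).integral_comp
    (MeasurableEquiv.shearAddRight G).measurableEmbedding F

end ShearedProduct

section FarFromDiagonal

variable {E : Type*} [NormedAddCommGroup E] {u : E → ℝ}

lemma norm_sq_sub_div_norm_rpow_le {s : ℝ} (d : ℝ) (hs : 1 / 2 ≤ s) {h : E} (hh : 1 ≤ ‖h‖) (x : E) :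
    ‖(u (x + h) - u x) ^ 2 / ‖h‖ ^ (d + 2 * s)‖ ≤
      2 * (u (x + h) ^ 2 * ‖h‖ ^ (-(d + 1)) + u x ^ 2 * ‖h‖ ^ (-(d + 1))) := by
  rw [Real.norm_of_nonneg (by positivity), div_eq_mul_inv, ← Real.rpow_neg (norm_nonneg h),
    ← add_mul, ← mul_assoc]
  gcongr ?_ * ?_
  · nlinarith [sq_nonneg (u (x + h) + u x)]
  · exact Real.rpow_le_rpow_of_exponent_le hh (by linarith)

variable [NormedSpace ℝ E] [FiniteDimensional ℝ E] [MeasurableSpace E] [BorelSpace E]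
  {μ : Measure E} [μ.IsAddHaarMeasure]

lemma exists_integrable_bound_sq_sub_div_norm_rpow_prod_compl_ball (hu : MemLp u 2 μ) :
    ∃ G : E × E → ℝ, Integrable G (μ.prod (μ.restrict (ball 0 1)ᶜ)) ∧
      ∀ s : ℝ, 1 / 2 ≤ s → ∀ᵐ p : E × E ∂μ.prod (μ.restrict (ball 0 1)ᶜ),
        ‖(u (p.1 + p.2) - u p.1) ^ 2 / ‖p.2‖ ^ (finrank ℝ E + 2 * s)‖ ≤ G p := by
  have hk : IntegrableOn (fun h : E => ‖h‖ ^ (-(finrank ℝ E + 1 : ℝ))) (ball 0 1)ᶜ μ :=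
    integrableOn_compl_ball_norm_rpow (by linarith) one_pos
  refine ⟨_, ((integrable_comp_add_mul_prod hu.integrable_sq hk).add
    (hu.integrable_sq.mul_prod hk)).const_mul 2, fun s hs => ?_⟩
  filter_upwards [Measure.quasiMeasurePreserving_snd.ae (ae_restrict_mem measurableSet_ball.compl)]
    with p hp
  exact norm_sq_sub_div_norm_rpow_le _ hs (by simpa using hp) p.1

lemma integrable_sq_sub_div_norm_rpow_prod_compl_ball (hu : MemLp u 2 μ) {s : ℝ} (hs : 1 / 2 ≤ s) :
    Integrable (fun p : E × E => (u (p.1 + p.2) - u p.1) ^ 2 / ‖p.2‖ ^ (finrank ℝ E + 2 * s))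
      (μ.prod (μ.restrict (ball 0 1)ᶜ)) := by
  obtain ⟨G, hG, hbound⟩ := exists_integrable_bound_sq_sub_div_norm_rpow_prod_compl_ball hu
  have hu_add : AEStronglyMeasurable (fun p : E × E => u (p.1 + p.2))
      (μ.prod (μ.restrict (ball 0 1)ᶜ)) :=
    hu.aestronglyMeasurable.comp_fst.comp_measurePreserving (measurePreserving_add_prod μ _)
  have hdenom : Measurable fun p : E × E => ‖p.2‖ ^ (finrank ℝ E + 2 * s) := by fun_prop
  exact hG.mono' (((hu_add.sub hu.aestronglyMeasurable.comp_fst).pow 2).div₀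
    hdenom.aestronglyMeasurable) (hbound s hs)

lemma tendsto_one_sub_mul_integral_prod_compl_ball (hu : MemLp u 2 μ) :
    Tendsto (fun s : ℝ => (1 - s) * ∫ p : E × E, (u (p.1 + p.2) - u p.1) ^ 2 /
        ‖p.2‖ ^ (finrank ℝ E + 2 * s) ∂μ.prod (μ.restrict (ball 0 1)ᶜ))
      (𝓝[<] 1) (𝓝 0) := by
  have hlim : Tendsto (fun s : ℝ => 1 - s) (𝓝[<] 1) (𝓝 0) :=
    ((by fun_prop : Continuous _).tendsto' 1 0 (by simp)).mono_left nhdsWithin_le_nhds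
  obtain ⟨G, hG, hbound⟩ := exists_integrable_bound_sq_sub_div_norm_rpow_prod_compl_ball hu
  refine hlim.zero_mul_isBoundedUnder_le (isBoundedUnder_of_eventually_le (a := ∫ p, G p
    ∂μ.prod (μ.restrict (ball 0 1)ᶜ)) ?_)
  filter_upwards [Ioo_mem_nhdsLT (by norm_num : (1 / 2 : ℝ) < 1)] with s hs
  exact norm_integral_le_of_norm_le hG (hbound s hs.1.le)

end FarFromDiagonal

section BourgainBrezisMironescu

variable {E : Type*} [NormedAddCommGroup E] [InnerProductSpace ℝ E] [FiniteDimensional ℝ E]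
  [MeasurableSpace E] [BorelSpace E] [Nontrivial E] {u : E → ℝ} {C : ℝ≥0}

lemma integral_sq_sub_div_norm_rpow_eq_add (hu : LipschitzWith C u) (hcu : HasCompactSupport u)
    {s : ℝ} (hs : s ∈ Ioo (1 / 2) 1) :
    ∫ p : E × E, (u p.1 - u p.2) ^ 2 / ‖p.1 - p.2‖ ^ (finrank ℝ E + 2 * s) =
      (∫ p : E × E, (u (p.1 + p.2) - u p.1) ^ 2 / ‖p.2‖ ^ (finrank ℝ E + 2 * s)
        ∂volume.prod (volume.restrict (ball 0 1))) +
      ∫ p : E × E, (u (p.1 + p.2) - u p.1) ^ 2 / ‖p.2‖ ^ (finrank ℝ E + 2 * s)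
        ∂volume.prod (volume.restrict (ball 0 1)ᶜ) := by
  rw [← integral_add_measure (integrable_sq_sub_div_norm_rpow_prod_ball hu hcu hs)
    (integrable_sq_sub_div_norm_rpow_prod_compl_ball
      (hu.continuous.memLp_of_hasCompactSupport hcu) hs.1.le),
    ← Measure.prod_add, Measure.restrict_add_restrict_compl measurableSet_ball,
    Measure.volume_eq_prod, ← integral_prod_comp_add_eq]
  simp only [sub_add_cancel_left, norm_neg, sub_sq_comm (u _) (u (_ + _))]

theorem tendsto_one_sub_mul_integral_sq_sub_div_norm_rpow (hu : LipschitzWith C u)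
    (hcu : HasCompactSupport u) :
    Tendsto (fun s : ℝ => (1 - s) *
        ∫ p : E × E, (u p.1 - u p.2) ^ 2 / ‖p.1 - p.2‖ ^ (finrank ℝ E + 2 * s))
      (𝓝[<] 1) (𝓝 (volume.real (ball (0 : E) 1) / 2 * ∫ x, ‖gradient u x‖ ^ 2)) := by
  have hsum := (tendsto_one_sub_mul_integral_prod_ball hu hcu).add
    (tendsto_one_sub_mul_integral_prod_compl_ball (μ := volume)
      (hu.continuous.memLp_of_hasCompactSupport hcu))
  rw [add_zero] at hsum
  refine hsum.congr' ?_
  filter_upwards [Ioo_mem_nhdsLT (by norm_num : (1 / 2 : ℝ) < 1)] with s hs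
  rw [integral_sq_sub_div_norm_rpow_eq_add hu hcu hs, mul_add]

-- By Rademacher's theorem `gradient u` is the true gradient almost everywhere; its junk value `0`
-- on the remaining null set does not contribute.
theorem fractional_gradient_norm_tendsto_gradient_norm_general (hu : LipschitzWith C u)
    (hcu : HasCompactSupport u) :
    Tendsto (fun s : ℝ => cns (finrank ℝ E) s / 2 *
        ∫ p : E × E, (u p.1 - u p.2) ^ 2 / ‖p.1 - p.2‖ ^ (finrank ℝ E + 2 * s))
      (𝓝[<] 1) (𝓝 (∫ x, ‖gradient u x‖ ^ 2)) := by
  have hV : volume.real (ball (0 : E) 1) ≠ 0 := (measureReal_ball_pos volume 0 one_pos).ne'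
  have hlim := ((tendsto_cns_finrank_div_one_sub (E := E)).div_const 2).mul
    (tendsto_one_sub_mul_integral_sq_sub_div_norm_rpow hu hcu)
  have hconst : 4 / volume.real (ball (0 : E) 1) / 2 *
      (volume.real (ball (0 : E) 1) / 2 * ∫ x, ‖gradient u x‖ ^ 2) = ∫ x, ‖gradient u x‖ ^ 2 := by
    field_simp
    norm_num
  rw [hconst] at hlim
  refine hlim.congr' ?_
  filter_upwards [self_mem_nhdsWithin] with s hs
  have hs1 : 1 - s ≠ 0 := (sub_pos.2 hs).ne'
  field_simp

end BourgainBrezisMironescu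

/-- The squared L²(ℝⁿ×ℝⁿ)-norm of the fractional gradient converges, as s → 1⁻, to the
squared L²-norm of the classical gradient. -/
theorem fractional_gradient_norm_tendsto_gradient_norm
    (n : ℕ) (hn : 1 ≤ n) (u : RR n → ℝ)
    (hu : ContDiff ℝ (⊤ : ℕ∞) u) (hcu : HasCompactSupport u) :
    Filter.Tendsto
      (fun s : ℝ => (cns n s / 2) *
        ∫ p : RR n × RR n, (u p.1 - u p.2) ^ 2 / ‖p.1 - p.2‖ ^ ((n : ℝ) + 2 * s))
      (nhdsWithin 1 (Set.Iio 1))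
      (nhds (∫ x : RR n, ‖gradient u x‖ ^ 2)) := by
  have : NeZero n := ⟨by omega⟩
  obtain ⟨C, hC⟩ := hu.lipschitzWith_of_hasCompactSupport hcu (by simp)
  simpa using fractional_gradient_norm_tendsto_gradient_norm_general hC hcu
end
end

section
/- (Fractional Liouville reduction, bilinear form identity.) Let n ≥ 1 be an integer, s ∈ (0,1), and let γ : ℝⁿ → ℝ be a smooth function with γ(x) ≥ γ₀ for some constant γ₀ > 0 and such that γ − 1 is compactly supported. Define q_γ(x) := −γ(x)^{-1/2} · (c_{n,s}/2) ∫_{ℝⁿ} (2γ^{1/2}(x) − γ^{1/2}(x+y) − γ^{1/2}(x−y)) / |y|^{n+2s} dy. Then for all smooth compactly supported u, v : ℝⁿ → ℝ, setting w := γ^{1/2} u and z := γ^{1/2} v, one has B_γ(u, v) = B_1(w, z) + ∫_{ℝⁿ} q_γ(x) w(x) z(x) dx, where B_1 is the bilinear form with γ ≡ 1. -/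
open MeasureTheory
noncomputable section

/-- The fractional conductivity bilinear form
B_γ(u,v) = (c_{n,s}/2) ∬ γ^{1/2}(x) γ^{1/2}(y) (u(x)-u(y))(v(x)-v(y)) / |x-y|^{n+2s} dx dy. -/
def Bform (n : ℕ) (s : ℝ) (γ u v : RR n → ℝ) : ℝ :=
  (cns n s / 2) * ∫ p : RR n × RR n,
    Real.sqrt (γ p.1) * Real.sqrt (γ p.2) * (u p.1 - u p.2) * (v p.1 - v p.2) /
      ‖p.1 - p.2‖ ^ ((n : ℝ) + 2 * s)

/-- The Liouville potential q_γ = -γ^{-1/2} (-Δ)^s γ^{1/2}, with the fractional Laplacian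
given by the symmetrized singular integral. -/
def liouvillePot (n : ℕ) (s : ℝ) (γ : RR n → ℝ) (x : RR n) : ℝ :=
  -(Real.sqrt (γ x))⁻¹ * ((cns n s / 2) * ∫ y : RR n,
    (2 * Real.sqrt (γ x) - Real.sqrt (γ (x + y)) - Real.sqrt (γ (x - y))) /
      ‖y‖ ^ ((n : ℝ) + 2 * s))

/-!
Write `g = γ^{1/2}` and let `k` be the kernel `‖·‖^{-(n+2s)}`. Pointwise,
`g(x) g(y) (u(x) - u(y)) (v(x) - v(y))` equals
`((gu)(x) - (gu)(y)) ((gv)(x) - (gv)(y)) - (g(x) - g(y)) ((guv)(x) - (guv)(y))`.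
Integrated against `k(y - x)`, the first product gives the form with `γ ≡ 1`. In the second, for
each fixed increment `y - x`, a translation moves both differences onto `g`, which produces the
symmetrized singular integral of `g` tested against `guv`. Only the integrability of
`min 1 ‖y‖² k(y)` matters: it makes both double integrals converge absolutely, so that Fubini
applies.
-/

section Regularity

/-- Bounded Lipschitz functions, with unspecified constants: the first-order regularity under which
the difference forms below converge absolutely. -/
structure BoundedLipschitz {X : Type*} [PseudoMetricSpace X] (f : X → ℝ) : Prop where
  exists_lipschitzWith : ∃ K, LipschitzWith K f
  exists_abs_le : ∃ M, ∀ x, |f x| ≤ M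

namespace BoundedLipschitz

variable {X : Type*} [PseudoMetricSpace X] {f g : X → ℝ}

lemma continuous (hf : BoundedLipschitz f) : Continuous f :=
  hf.exists_lipschitzWith.choose_spec.continuous

lemma of_hasCompactSupport {K : NNReal} (hf : LipschitzWith K f) (hc : HasCompactSupport f) :
    BoundedLipschitz f :=
  ⟨⟨K, hf⟩, hc.exists_bound_of_continuous hf.continuous⟩

lemma add_const (hf : BoundedLipschitz f) (c : ℝ) : BoundedLipschitz fun x => f x + c := by
  obtain ⟨⟨K, hK⟩, M, hM⟩ := hf
  refine ⟨⟨K, fun x y => by simpa only [edist_add_right] using hK x y⟩, M + |c|, fun x => ?_⟩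
  exact (abs_add_le _ _).trans (by gcongr; exact hM x)

lemma mul (hf : BoundedLipschitz f) (hg : BoundedLipschitz g) : BoundedLipschitz (f * g) := by
  obtain ⟨⟨K, hK⟩, M, hM⟩ := hf
  obtain ⟨⟨L, hL⟩, N, hN⟩ := hg
  refine ⟨⟨_, LipschitzWith.of_dist_le' (K := M * L + K * N) fun x y => ?_⟩, M * N, fun x => ?_⟩
  · have hM₀ : 0 ≤ M := (abs_nonneg _).trans (hM x)
    have hfxy : |f x - f y| ≤ K * dist x y := hK.dist_le_mul x y
    have hgxy : |g x - g y| ≤ L * dist x y := hL.dist_le_mul x y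
    calc |f x * g x - f y * g y| = |f x * (g x - g y) + (f x - f y) * g y| := by ring_nf
      _ ≤ |f x| * |g x - g y| + |f x - f y| * |g y| := by
        simpa only [abs_mul] using abs_add_le (f x * (g x - g y)) ((f x - f y) * g y)
      _ ≤ M * (L * dist x y) + K * dist x y * N := by gcongr <;> apply_assumption
      _ = (M * L + K * N) * dist x y := by ring
  · simpa only [Pi.mul_apply, abs_mul] using
      mul_le_mul (hM x) (hN x) (abs_nonneg _) ((abs_nonneg _).trans (hM x))

lemma exists_abs_sub_le (hf : BoundedLipschitz f) :
    ∃ C, 0 ≤ C ∧ ∀ x y, |f x - f y| ≤ C * min 1 (dist x y) := by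
  obtain ⟨⟨K, hK⟩, M, hM⟩ := hf
  refine ⟨max (2 * M) K, by positivity, fun x y => ?_⟩
  rw [mul_min_of_nonneg _ _ (by positivity), mul_one]
  refine le_min (le_max_of_le_left ?_) ?_
  · linarith [abs_sub (f x) (f y), hM x, hM y]
  · exact (hK.dist_le_mul x y).trans (by gcongr; exact le_max_right _ _)

lemma exists_abs_sub_le_mul_indicator (hf : BoundedLipschitz f) :
    ∃ C, ∀ x y, |f x - f y| ≤ C * min 1 (dist x y) *
      ((tsupport f).indicator 1 x + (tsupport f).indicator 1 y) := by
  obtain ⟨C, hC₀, hC⟩ := hf.exists_abs_sub_le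
  have hχ : ∀ z, 0 ≤ (tsupport f).indicator (1 : X → ℝ) z :=
    fun z => Set.indicator_nonneg (fun _ _ => zero_le_one) z
  refine ⟨C, fun x y => ?_⟩
  by_cases hxy : x ∈ tsupport f ∨ y ∈ tsupport f
  · refine (hC x y).trans (le_mul_of_one_le_right (by positivity) ?_)
    rcases hxy with hx | hy
    · simpa only [Set.indicator_of_mem hx, Pi.one_apply] using le_add_of_nonneg_right (hχ y)
    · simpa only [Set.indicator_of_mem hy, Pi.one_apply] using le_add_of_nonneg_left (hχ x)
  · obtain ⟨hx, hy⟩ := not_or.1 hxy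
    simp [image_eq_zero_of_notMem_tsupport hx, image_eq_zero_of_notMem_tsupport hy, hx, hy]

end BoundedLipschitz

/-- The symmetric second difference of `f` at `x` with increment `y`, signed as in the fractional
Laplacian. -/
def secondDiff {E : Type*} [AddGroup E] (f : E → ℝ) (x y : E) : ℝ :=
  2 * f x - f (x + y) - f (x - y)

variable {E : Type*} [NormedAddCommGroup E] {f : E → ℝ}

lemma BoundedLipschitz.exists_abs_secondDiff_le (hf : BoundedLipschitz f) {C : ℝ}
    (hC : ∀ x y, |secondDiff f x y| ≤ C * ‖y‖ ^ 2) :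
    ∃ D, ∀ x y, |secondDiff f x y| ≤ D * min 1 (‖y‖ ^ 2) := by
  obtain ⟨M, hM⟩ := hf.exists_abs_le
  have hM₀ : 0 ≤ M := (abs_nonneg _).trans (hM 0)
  have hbdd : ∀ x y, |secondDiff f x y| ≤ 4 * M := fun x y => by
    have := abs_le.1 (hM x)
    have := abs_le.1 (hM (x + y))
    have := abs_le.1 (hM (x - y))
    rw [secondDiff, abs_le]
    constructor <;> linarith
  refine ⟨max (4 * M) C, fun x y => ?_⟩
  rw [mul_min_of_nonneg _ _ (by positivity), mul_one]
  refine le_min (le_max_of_le_left (hbdd x y)) ((hC x y).trans ?_)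
  gcongr
  exact le_max_right _ _

variable [NormedSpace ℝ E]

lemma norm_sub_sub_fderiv_le {F : Type*} [NormedAddCommGroup F] [NormedSpace ℝ F] {φ : E → F}
    (hφ : Differentiable ℝ φ) {L : NNReal} (hL : LipschitzWith L (fderiv ℝ φ)) (x y : E) :
    ‖φ (x + y) - φ x - fderiv ℝ φ x y‖ ≤ L * ‖y‖ ^ 2 := by
  have hbound : ∀ z ∈ Metric.closedBall x ‖y‖, ‖fderiv ℝ φ z - fderiv ℝ φ x‖ ≤ L * ‖y‖ :=
    fun z hz => (hL.norm_sub_le z x).trans (by gcongr; rwa [← mem_closedBall_iff_norm])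
  have := (convex_closedBall x ‖y‖).norm_image_sub_le_of_norm_fderiv_le' (y := x + y)
    (fun z _ => hφ z) hbound (Metric.mem_closedBall_self (norm_nonneg y)) (by simp)
  rwa [add_sub_cancel_left, mul_assoc, ← sq] at this

lemma abs_secondDiff_le (hf : Differentiable ℝ f) {L : NNReal}
    (hL : LipschitzWith L (fderiv ℝ f)) (x y : E) :
    |secondDiff f x y| ≤ 2 * L * ‖y‖ ^ 2 := by
  have hplus := norm_sub_sub_fderiv_le hf hL x y
  have hminus := norm_sub_sub_fderiv_le hf hL x (-y)
  rw [map_neg, norm_neg, ← sub_eq_add_neg] at hminus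
  rw [Real.norm_eq_abs, abs_le] at hplus hminus
  rw [secondDiff, abs_le]
  constructor <;> linarith

lemma BoundedLipschitz.of_contDiff_of_hasCompactSupport_sub {c : ℝ} (hf : ContDiff ℝ 1 f)
    (hc : HasCompactSupport fun x => f x - c) : BoundedLipschitz f := by
  obtain ⟨K, hK⟩ := (hf.sub contDiff_const).lipschitzWith_of_hasCompactSupport hc one_ne_zero
  simpa only [sub_add_cancel] using (BoundedLipschitz.of_hasCompactSupport hK hc).add_const c

lemma exists_abs_secondDiff_le_of_hasCompactSupport_sub {c : ℝ} (hf : ContDiff ℝ 2 f)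
    (hc : HasCompactSupport fun x => f x - c) :
    ∃ C, ∀ x y, |secondDiff f x y| ≤ C * ‖y‖ ^ 2 := by
  have hc' : HasCompactSupport (fderiv ℝ f) := by
    have hfderiv : fderiv ℝ (fun x => f x - c) = fderiv ℝ f := funext fun _ => fderiv_sub_const c
    exact hfderiv ▸ hc.fderiv ℝ
  obtain ⟨L, hL⟩ := ContDiff.lipschitzWith_of_hasCompactSupport hc'
    (hf.fderiv_right (m := 1) le_rfl) one_ne_zero
  exact ⟨2 * L, abs_secondDiff_le (hf.differentiable two_ne_zero) hL⟩

end Regularity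

section LevyKernel

/-- `k` is measurable and integrates `min 1 ‖y‖²`, i.e. it is the density of a (signed) Lévy
measure: the condition under which difference forms and symmetrized singular integrals with kernel
`k` converge absolutely. -/
structure IsLevyKernel {E : Type*} [NormedAddCommGroup E] [MeasurableSpace E] (μ : Measure E)
    (k : E → ℝ) : Prop where
  measurable : Measurable k
  integrable : Integrable (fun y => min 1 (‖y‖ ^ 2) * k y) μ

lemma integrableOn_Ioi_min_one_sq_mul_rpow {a : ℝ} (ha : -3 < a) (ha' : a < -1) :
    IntegrableOn (fun r : ℝ => min 1 (r ^ 2) * r ^ a) (Set.Ioi 0) := by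
  rw [← Set.Ioc_union_Ioi_eq_Ioi (zero_le_one (α := ℝ))]
  refine IntegrableOn.union ?_ ?_
  · have hnear : IntegrableOn (fun r : ℝ => r ^ (2 + a)) (Set.Ioc 0 1) := by
      rw [← intervalIntegrable_iff_integrableOn_Ioc_of_le zero_le_one]
      exact intervalIntegral.intervalIntegrable_rpow' (by linarith)
    refine hnear.congr_fun (fun r hr => ?_) measurableSet_Ioc
    beta_reduce
    rw [min_eq_right (pow_le_one₀ hr.1.le hr.2), Real.rpow_add hr.1, Real.rpow_two]
  · have hfar : IntegrableOn (fun r : ℝ => r ^ a) (Set.Ioi 1) :=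
      integrableOn_Ioi_rpow_of_lt ha' one_pos
    refine hfar.congr_fun (fun r (hr : 1 < r) => ?_) measurableSet_Ioi
    beta_reduce
    rw [min_eq_left (one_le_pow₀ hr.le), one_mul]

lemma isLevyKernel_norm_rpow {E : Type*} [NormedAddCommGroup E] [NormedSpace ℝ E]
    [FiniteDimensional ℝ E] [Nontrivial E] [MeasurableSpace E] [BorelSpace E] (μ : Measure E)
    [μ.IsAddHaarMeasure] {s : ℝ} (hs : s ∈ Set.Ioo (0 : ℝ) 1) :
    IsLevyKernel μ fun y : E => (‖y‖ ^ ((Module.finrank ℝ E : ℝ) + 2 * s))⁻¹ := by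
  refine ⟨by fun_prop, (integrable_fun_norm_addHaar μ
    (f := fun r : ℝ => min 1 (r ^ 2) * (r ^ ((Module.finrank ℝ E : ℝ) + 2 * s))⁻¹)).2 ?_⟩
  have hradial : IntegrableOn (fun r : ℝ => min 1 (r ^ 2) * r ^ (-1 - 2 * s)) (Set.Ioi 0) :=
    integrableOn_Ioi_min_one_sq_mul_rpow (by linarith [hs.2]) (by linarith [hs.1])
  refine hradial.congr_fun (fun r (hr : 0 < r) => ?_) measurableSet_Ioi
  have hpow : r ^ (-1 - 2 * s) =
      r ^ (Module.finrank ℝ E - 1) * (r ^ ((Module.finrank ℝ E : ℝ) + 2 * s))⁻¹ := by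
    rw [← Real.rpow_natCast, ← Real.rpow_neg hr.le, ← Real.rpow_add hr,
      Nat.cast_sub Module.finrank_pos]
    congr 1
    push_cast
    ring
  simp only [smul_eq_mul, hpow]
  ring

end LevyKernel

section JumpForm

variable {E : Type*} [NormedAddCommGroup E] [MeasurableSpace E]

/-- The symmetric difference form `∬ (g(x) - g(y)) (h(x) - h(y)) k(y - x) dx dy`, the bilinear form
of the nonlocal operator `jumpOperator`. -/
def jumpForm (μ : Measure E) (k g h : E → ℝ) : ℝ :=
  ∫ p : E × E, (g p.1 - g p.2) * (h p.1 - h p.2) * k (p.2 - p.1) ∂μ.prod μ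

/-- The nonlocal operator with jump kernel `k`, given by the symmetrized singular integral; without
its normalizing constant this is the fractional Laplacian when `k = ‖·‖^{-(n+2s)}`. -/
def jumpOperator (μ : Measure E) (k g : E → ℝ) (x : E) : ℝ :=
  ∫ y, secondDiff g x y * k y ∂μ

variable [BorelSpace E] {μ : Measure E} {k g h : E → ℝ}

lemma integrable_mul_secondDiff_mul [SecondCountableTopology E] (hk : IsLevyKernel μ k)
    (hg : Continuous g) {C : ℝ} (hC : ∀ x y, |secondDiff g x y| ≤ C * min 1 (‖y‖ ^ 2))
    (hh : Integrable h μ) :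
    Integrable (fun p : E × E => h p.1 * (secondDiff g p.1 p.2 * k p.2)) (μ.prod μ) := by
  have hmeas : AEStronglyMeasurable (fun p : E × E => h p.1 * (secondDiff g p.1 p.2 * k p.2))
      (μ.prod μ) := by
    have := hg.measurable
    have := hk.measurable
    unfold secondDiff
    exact hh.aestronglyMeasurable.comp_fst.mul (Measurable.aestronglyMeasurable (by fun_prop))
  refine ((hh.norm.mul_prod hk.integrable.norm).const_mul C).mono' hmeas
    (.of_forall fun ⟨x, y⟩ => ?_)
  calc ‖h x * (secondDiff g x y * k y)‖ = |h x| * (|secondDiff g x y| * |k y|) := by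
        simp only [norm_mul, Real.norm_eq_abs]
    _ ≤ |h x| * (C * min 1 (‖y‖ ^ 2) * |k y|) := by gcongr; exact hC x y
    _ = C * (‖h x‖ * ‖min 1 (‖y‖ ^ 2) * k y‖) := by
      rw [norm_mul, Real.norm_of_nonneg (by positivity : 0 ≤ min 1 (‖y‖ ^ 2))]
      simp only [Real.norm_eq_abs]
      ring

lemma jumpForm_eq_integral_add [SecondCountableTopology E] [SFinite μ]
    [μ.IsAddLeftInvariant] (k g h : E → ℝ) :
    jumpForm μ k g h =
      ∫ p : E × E, (g p.1 - g (p.1 + p.2)) * (h p.1 - h (p.1 + p.2)) * k p.2 ∂μ.prod μ := by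
  simpa only [jumpForm, add_sub_cancel] using (measurePreserving_prod_sub μ μ).integral_comp
    (MeasurableEquiv.shearSubRight E).measurableEmbedding
    fun p : E × E => (g p.1 - g (p.1 + p.2)) * (h p.1 - h (p.1 + p.2)) * k p.2

variable [IsFiniteMeasureOnCompacts μ] [μ.IsAddLeftInvariant]

lemma integral_sub_mul_sub_eq_integral_mul_secondDiff (hg : Continuous g) (hh : Continuous h)
    (hc : HasCompactSupport h) (y : E) :
    ∫ x, (g x - g (x + y)) * (h x - h (x + y)) ∂μ = ∫ x, h x * secondDiff g x y ∂μ := by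
  have hright : Integrable (fun x => (g x - g (x + y)) * h x) μ :=
    Continuous.integrable_of_hasCompactSupport (by fun_prop) hc.mul_left
  have hleft : Integrable (fun x => (g (x - y) - g x) * h x) μ :=
    Continuous.integrable_of_hasCompactSupport (by fun_prop) hc.mul_left
  have hshift : Integrable (fun x => (g x - g (x + y)) * h (x + y)) μ := by
    simpa only [add_sub_cancel_right] using hleft.comp_add_right y
  have htranslate : ∫ x, (g x - g (x + y)) * h (x + y) ∂μ = ∫ x, (g (x - y) - g x) * h x ∂μ := by
    simpa only [add_sub_cancel_right] using
      integral_add_right_eq_self (μ := μ) (fun x => (g (x - y) - g x) * h x) y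
  simp_rw [mul_sub (_ - _) (h _)]
  rw [integral_sub hright hshift, htranslate, ← integral_sub hright hleft]
  refine integral_congr_ae (.of_forall fun x => ?_)
  simp only [secondDiff]
  ring

variable [SecondCountableTopology E] [SFinite μ]

lemma integrable_sub_mul_sub_add (hk : IsLevyKernel μ k) (hg : BoundedLipschitz g)
    (hh : BoundedLipschitz h) (hc : HasCompactSupport h) :
    Integrable (fun p : E × E => (g p.1 - g (p.1 + p.2)) * (h p.1 - h (p.1 + p.2)) * k p.2)
      (μ.prod μ) := by
  obtain ⟨A, hA₀, hA⟩ := hg.exists_abs_sub_le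
  obtain ⟨B, hB⟩ := hh.exists_abs_sub_le_mul_indicator
  set χ : E → ℝ := (tsupport h).indicator 1
  set κ : E → ℝ := fun y => ‖min 1 (‖y‖ ^ 2) * k y‖ with hκ
  have hχ : Integrable χ μ := by
    rw [integrable_indicator_iff (isClosed_tsupport h).measurableSet]
    exact integrableOn_const hc.isCompact.measure_lt_top.ne
  have hstart : Integrable (fun p : E × E => χ p.1 * κ p.2) (μ.prod μ) :=
    hχ.mul_prod hk.integrable.norm
  have hend : Integrable (fun p : E × E => χ (p.1 + p.2) * κ p.2) (μ.prod μ) :=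
    (measurePreserving_add_prod μ μ).integrable_comp_of_integrable hstart
  have hmeas : AEStronglyMeasurable
      (fun p : E × E => (g p.1 - g (p.1 + p.2)) * (h p.1 - h (p.1 + p.2)) * k p.2)
      (μ.prod μ) := by
    have := hg.continuous.measurable
    have := hh.continuous.measurable
    have := hk.measurable
    exact Measurable.aestronglyMeasurable (by fun_prop)
  refine ((hstart.add hend).const_mul (A * B)).mono' hmeas (.of_forall fun ⟨x, y⟩ => ?_)
  have hgxy := hA x (x + y)
  have hhxy := hB x (x + y)
  rw [dist_self_add_right] at hgxy hhxy
  have hmin : min 1 (‖y‖ ^ 2) = min 1 ‖y‖ * min 1 ‖y‖ := by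
    rcases le_total 1 ‖y‖ with hy | hy
    · rw [min_eq_left hy, min_eq_left (one_le_pow₀ hy), one_mul]
    · rw [min_eq_right hy, min_eq_right (pow_le_one₀ (norm_nonneg y) hy), sq]
  calc ‖(g x - g (x + y)) * (h x - h (x + y)) * k y‖
      = |g x - g (x + y)| * |h x - h (x + y)| * |k y| := by simp only [norm_mul, Real.norm_eq_abs]
    _ ≤ A * min 1 ‖y‖ * (B * min 1 ‖y‖ * (χ x + χ (x + y))) * |k y| := by gcongr
    _ = A * B * (χ x * κ y + χ (x + y) * κ y) := by
      rw [hκ]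
      beta_reduce
      rw [norm_mul, Real.norm_of_nonneg (by positivity), hmin, Real.norm_eq_abs]
      ring

lemma integrable_jumpForm (hk : IsLevyKernel μ k) (hg : BoundedLipschitz g)
    (hh : BoundedLipschitz h) (hc : HasCompactSupport h) :
    Integrable (fun p : E × E => (g p.1 - g p.2) * (h p.1 - h p.2) * k (p.2 - p.1))
      (μ.prod μ) := by
  simpa only [Function.comp_def, add_sub_cancel] using
    (measurePreserving_prod_sub μ μ).integrable_comp_of_integrable
      (integrable_sub_mul_sub_add hk hg hh hc)

theorem jumpForm_eq_integral_mul_jumpOperator (hk : IsLevyKernel μ k) (hg : BoundedLipschitz g)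
    {C : ℝ} (hC : ∀ x y, |secondDiff g x y| ≤ C * ‖y‖ ^ 2)
    (hh : BoundedLipschitz h) (hc : HasCompactSupport h) :
    jumpForm μ k g h = ∫ x, h x * jumpOperator μ k g x ∂μ := by
  obtain ⟨D, hD⟩ := hg.exists_abs_secondDiff_le hC
  have hint := integrable_mul_secondDiff_mul hk hg.continuous hD
    (hh.continuous.integrable_of_hasCompactSupport hc)
  calc jumpForm μ k g h
      = ∫ y, (∫ x, (g x - g (x + y)) * (h x - h (x + y)) ∂μ) * k y ∂μ := by
        rw [jumpForm_eq_integral_add, integral_prod_symm _ (integrable_sub_mul_sub_add hk hg hh hc)]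
        simp only [integral_mul_const]
    _ = ∫ y, ∫ x, h x * (secondDiff g x y * k y) ∂μ ∂μ := by
        simp only [integral_sub_mul_sub_eq_integral_mul_secondDiff hg.continuous hh.continuous hc,
          ← mul_assoc, integral_mul_const]
    _ = ∫ x, h x * jumpOperator μ k g x ∂μ := by
        rw [← integral_integral_swap hint]
        simp only [integral_const_mul, jumpOperator]

theorem integral_conductivity_eq (hk : IsLevyKernel μ k) (hg : BoundedLipschitz g)
    {C : ℝ} (hC : ∀ x y, |secondDiff g x y| ≤ C * ‖y‖ ^ 2) {u v : E → ℝ}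
    (hu : BoundedLipschitz u) (hv : BoundedLipschitz v) (hc : HasCompactSupport v) :
    ∫ p : E × E, g p.1 * g p.2 * (u p.1 - u p.2) * (v p.1 - v p.2) * k (p.2 - p.1) ∂μ.prod μ =
      jumpForm μ k (g * u) (g * v) - ∫ x, (g * u * v) x * jumpOperator μ k g x ∂μ := by
  have hguv : BoundedLipschitz (g * u * v) := (hg.mul hu).mul hv
  have hcguv : HasCompactSupport (g * u * v) := hc.mul_left
  rw [← jumpForm_eq_integral_mul_jumpOperator hk hg hC hguv hcguv, jumpForm, jumpForm,
    ← integral_sub (integrable_jumpForm hk (hg.mul hu) (hg.mul hv) hc.mul_left)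
      (integrable_jumpForm hk hg hguv hcguv)]
  refine integral_congr_ae (.of_forall fun p => ?_)
  simp only [Pi.mul_apply]
  ring

end JumpForm

section FractionalConductivity

variable {n : ℕ} {s : ℝ}

/-- The kernel `‖y‖^{-(n+2s)}` of the fractional Laplacian `(-Δ)^s`, without the constant
`c_{n,s}`; its value at `0` is junk. -/
def fracKernel (n : ℕ) (s : ℝ) (y : RR n) : ℝ :=
  (‖y‖ ^ ((n : ℝ) + 2 * s))⁻¹

lemma isLevyKernel_fracKernel (hn : 1 ≤ n) (hs : s ∈ Set.Ioo (0 : ℝ) 1) :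
    IsLevyKernel volume (fracKernel n s) := by
  have : Nonempty (Fin n) := ⟨⟨0, hn⟩⟩
  unfold fracKernel
  simpa only [finrank_euclideanSpace_fin] using
    isLevyKernel_norm_rpow (volume : Measure (RR n)) hs

lemma hasCompactSupport_sqrt_sub_one {X : Type*} [TopologicalSpace X] {γ : X → ℝ}
    (hc : HasCompactSupport fun x => γ x - 1) : HasCompactSupport fun x => √(γ x) - 1 := by
  refine hc.mono (Function.support_subset_iff'.2 fun x hx => ?_)
  rw [Function.notMem_support, sub_eq_zero] at hx
  rw [hx, Real.sqrt_one, sub_self]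

lemma Bform_eq_integral_fracKernel (γ u v : RR n → ℝ) :
    Bform n s γ u v = cns n s / 2 * ∫ p : RR n × RR n,
      √(γ p.1) * √(γ p.2) * (u p.1 - u p.2) * (v p.1 - v p.2) * fracKernel n s (p.2 - p.1) := by
  simp only [Bform, fracKernel, div_eq_mul_inv, norm_sub_rev]

lemma Bform_one_eq_jumpForm (w z : RR n → ℝ) :
    Bform n s (fun _ => 1) w z = cns n s / 2 * jumpForm volume (fracKernel n s) w z := by
  simp only [Bform_eq_integral_fracKernel, jumpForm, Real.sqrt_one, one_mul, Measure.volume_eq_prod]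

lemma liouvillePot_mul_mul {γ : RR n → ℝ} {x : RR n} (hx : 0 < γ x) (a b : ℝ) :
    liouvillePot n s γ x * (√(γ x) * a) * (√(γ x) * b) =
      -(cns n s / 2) * (√(γ x) * a * b *
        jumpOperator volume (fracKernel n s) (fun x => √(γ x)) x) := by
  have hsqrt : √(γ x) ≠ 0 := (Real.sqrt_pos.2 hx).ne'
  have hpot : liouvillePot n s γ x = -(√(γ x))⁻¹ *
      (cns n s / 2 * jumpOperator volume (fracKernel n s) (fun x => √(γ x)) x) := by
    simp only [liouvillePot, jumpOperator, secondDiff, fracKernel, div_eq_mul_inv]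
  rw [hpot]
  field_simp

theorem fractional_liouville_reduction_bilinear_general
    (n : ℕ) (hn : 1 ≤ n) (s : ℝ) (hs : s ∈ Set.Ioo (0 : ℝ) 1)
    (γ : RR n → ℝ) (hγ : ∀ x, 0 < γ x) (hlip : BoundedLipschitz fun x => √(γ x))
    {C : ℝ} (hC : ∀ x y, |secondDiff (fun x => √(γ x)) x y| ≤ C * ‖y‖ ^ 2)
    (u v : RR n → ℝ) (hu : BoundedLipschitz u)
    {K : NNReal} (hv : LipschitzWith K v) (hcv : HasCompactSupport v) :
    Bform n s γ u v
      = Bform n s (fun _ => 1) (fun x => √(γ x) * u x) (fun x => √(γ x) * v x)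
        + ∫ x : RR n, liouvillePot n s γ x * (√(γ x) * u x) * (√(γ x) * v x) := by
  have hform := integral_conductivity_eq (isLevyKernel_fracKernel hn hs) hlip hC hu
    (.of_hasCompactSupport hv hcv) hcv
  simp only [liouvillePot_mul_mul (hγ _), integral_const_mul]
  rw [Bform_eq_integral_fracKernel, Bform_one_eq_jumpForm, Measure.volume_eq_prod, hform]
  simp only [Pi.mul_def]
  ring

end FractionalConductivity

/-- Fractional Liouville reduction, bilinear form identity:
B_γ(u,v) = B_1(γ^{1/2}u, γ^{1/2}v) + ∫ q_γ (γ^{1/2}u)(γ^{1/2}v). -/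
theorem fractional_liouville_reduction_bilinear
    (n : ℕ) (hn : 1 ≤ n) (s : ℝ) (hs : s ∈ Set.Ioo (0 : ℝ) 1)
    (γ : RR n → ℝ) (hγ : ContDiff ℝ (⊤ : ℕ∞) γ)
    (γ₀ : ℝ) (hγ₀ : 0 < γ₀) (hlb : ∀ x, γ₀ ≤ γ x)
    (hsupp : HasCompactSupport (fun x => γ x - 1))
    (u v : RR n → ℝ)
    (hu : ContDiff ℝ (⊤ : ℕ∞) u) (hcu : HasCompactSupport u)
    (hv : ContDiff ℝ (⊤ : ℕ∞) v) (hcv : HasCompactSupport v) :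
    Bform n s γ u v
      = Bform n s (fun _ => 1) (fun x => Real.sqrt (γ x) * u x) (fun x => Real.sqrt (γ x) * v x)
        + ∫ x : RR n,
            liouvillePot n s γ x * (Real.sqrt (γ x) * u x) * (Real.sqrt (γ x) * v x) := by
  have hpos : ∀ x, 0 < γ x := fun x => hγ₀.trans_le (hlb x)
  have hsqrt : ContDiff ℝ 2 fun x => √(γ x) :=
    contDiff_infty.1 (hγ.sqrt fun x => (hpos x).ne') 2
  have hsqrt_supp := hasCompactSupport_sqrt_sub_one hsupp
  obtain ⟨C, hC⟩ := exists_abs_secondDiff_le_of_hasCompactSupport_sub hsqrt hsqrt_supp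
  obtain ⟨_, hu_lip⟩ := hu.lipschitzWith_of_hasCompactSupport hcu (by simp)
  obtain ⟨_, hv_lip⟩ := hv.lipschitzWith_of_hasCompactSupport hcv (by simp)
  exact fractional_liouville_reduction_bilinear_general n hn s hs γ hpos
    (.of_contDiff_of_hasCompactSupport_sub (hsqrt.of_le one_le_two) hsqrt_supp) hC u v
    (.of_hasCompactSupport hu_lip hcu) hv_lip hcv
end
end
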